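/- Fix real numbers u, v, w, r, t with u+v > 0, w > 0, r > 0, −2w < t < 2r and u − t/2 < 0. With q = q_N = exp(−2/√N), the limit as N → ∞ of N^{u+v} · (q^{−2u+t};q)_∞ (−q^{v+w+t};q)_∞ (−q^{v+r};q)_∞ (q^{w+r};q)_∞ / [ (q^{v−u+t};q)_∞ (−q^{w−u+t};q)_∞ (−q^{r−u};q)_∞ (q^{u+v+w+r};q)_∞ ] exists and equals Γ(u+v+w+r) Γ(v−u+t) / ( Γ(−2u+t) Γ(w+r) ). -/

import Mathlib

open Filter

/-- Infinite q-Pochhammer symbol `(a;q)_∞ = ∏_{k=0}^∞ (1 - a q^k)` for complex `a, q`. -/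
noncomputable def qPochInf (a q : ℂ) : ℂ := ∏' k : ℕ, (1 - a * q ^ k)

/-- Weak asymmetry scaling `q_N = exp(-2/√N)`. -/
noncomputable def qN (N : ℕ) : ℝ := Real.exp (-2 / Real.sqrt N)

/-- Real powers of `q_N`: `q_N^x = exp(-2x/√N)`, as a complex number. -/
noncomputable def qpow (N : ℕ) (x : ℝ) : ℂ := Complex.ofReal (Real.exp (-2 * x / Real.sqrt N))

/-!
Jackson's q-Gamma function `Γ_q(x) = (q;q)_∞ / (q^x;q)_∞ * (1 - q)^(1 - x)` is log-convex on the
positive axis and satisfies `Γ_q(x + 1) = [x]_q Γ_q(x)`. As in the proof of the Bohr–Mollerup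
theorem, this traps `Γ_q(x)` between two q-analogues of the `n`-th term of Euler's limit formula
for `Γ(x)`; letting first `q → 1` and then `n → ∞` gives `Γ_q(x) → Γ(x)`.

Hence `(q^x;q)_∞ / (q^y;q)_∞ = (1 - q)^(y - x) Γ_q(y) / Γ_q(x)` produces the Gamma factors of the
limit. The symbols with negative argument contribute only powers of 2: by
`(a;q)_∞ (-a;q)_∞ = (a²;q²)_∞`, the quotient `(-q^x;q)_∞ / (-q;q)_∞` equals
`(1 + q)^(1 - x) Γ_q(x) / Γ_{q²}(x)`, which tends to `2^(1 - x)`. These powers of 2 cancel against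
those coming from `1 - q_N ~ 2 / √N`.
-/

open Set Topology

section Concavity

variable {E : Type*} [AddCommMonoid E] [Module ℝ E] {s : Set E}

lemma concaveOn_log_of_pos {f : E → ℝ} (hf : ConcaveOn ℝ s f) (hpos : ∀ x ∈ s, 0 < f x) :
    ConcaveOn ℝ s fun x => Real.log (f x) := by
  refine ⟨hf.1, fun x hx y hy a b ha hb hab => ?_⟩
  have hlog := strictConcaveOn_log_Ioi.concaveOn
  calc a • Real.log (f x) + b • Real.log (f y)
      ≤ Real.log (a • f x + b • f y) := hlog.2 (hpos x hx) (hpos y hy) ha hb hab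
    _ ≤ Real.log (f (a • x + b • y)) :=
      Real.log_le_log (hlog.1 (hpos x hx) (hpos y hy) ha hb hab) (hf.2 hx hy ha hb hab)

lemma concaveOn_tsum {ι : Type*} {f : ι → E → ℝ} (hs : Convex ℝ s)
    (hf : ∀ i, ConcaveOn ℝ s (f i)) (hsum : ∀ x ∈ s, Summable fun i => f i x) :
    ConcaveOn ℝ s fun x => ∑' i, f i x := by
  refine ⟨hs, fun x hx y hy a b ha hb hab => ?_⟩
  have hx' := (hsum x hx).const_smul a
  have hy' := (hsum y hy).const_smul b
  dsimp only
  rw [← (hsum x hx).tsum_const_smul a, ← (hsum y hy).tsum_const_smul b, ← hx'.tsum_add hy']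
  exact (hx'.add hy').tsum_le_tsum (fun i => (hf i).2 hx hy ha hb hab)
    (hsum _ (hs hx hy ha hb hab))

end Concavity

/-- `F` is a Gamma function for the recursion factor `h`: it satisfies the hypotheses of the
Bohr–Mollerup theorem, with `F (y + 1) = h y * F y` in place of `F (y + 1) = y * F y`. -/
structure IsGammaFor (h F : ℝ → ℝ) : Prop where
  convexOn_log : ConvexOn ℝ (Ioi 0) (Real.log ∘ F)
  add_one : ∀ y, 0 < y → F (y + 1) = h y * F y
  pos : ∀ y, 0 < y → 0 < F y
  one : F 1 = 1

/-- The analogue of the `n`-th term `Real.GammaSeq x n` of Euler's limit formula for a recursion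
factor `h`, with the base `c` of the power left free; the classical choice is `c = n`. -/
noncomputable def eulerSeq (h : ℝ → ℝ) (x c : ℝ) (n : ℕ) : ℝ :=
  h c ^ x * (∏ k ∈ Finset.range n, h (k + 1)) / ∏ k ∈ Finset.range (n + 1), h (x + k)

lemma eulerSeq_id (x c : ℝ) (n : ℕ) :
    eulerSeq id x c n =
      c ^ x * (n.factorial : ℝ) / ∏ k ∈ Finset.range (n + 1), (x + k) := by
  simp only [eulerSeq, id_eq, ← Finset.prod_range_add_one_eq_factorial, Nat.cast_prod,
    Nat.cast_add, Nat.cast_one]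

namespace IsGammaFor

variable {h F : ℝ → ℝ} (hF : IsGammaFor h F)

include hF

lemma factor_pos {y : ℝ} (hy : 0 < y) : 0 < h y := by
  have := hF.pos (y + 1) (by linarith)
  rw [hF.add_one y hy] at this
  exact pos_of_mul_pos_left this (hF.pos y hy).le

lemma log_factor {y : ℝ} (hy : 0 < y) :
    Real.log (h y) = Real.log (F (y + 1)) - Real.log (F y) := by
  rw [hF.add_one y hy, Real.log_mul (hF.factor_pos hy).ne' (hF.pos y hy).ne', add_sub_cancel_right]

lemma add_nat {x : ℝ} (hx : 0 < x) (n : ℕ) :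
    F (x + n) = (∏ k ∈ Finset.range n, h (x + k)) * F x := by
  induction n with
  | zero => simp
  | succ n ih =>
    rw [Nat.cast_add_one, ← add_assoc, hF.add_one _ (by positivity), ih, Finset.prod_range_succ]
    ring

lemma nat_add_one (n : ℕ) : F (n + 1) = ∏ k ∈ Finset.range n, h (k + 1) := by
  simpa only [hF.one, mul_one, add_comm] using hF.add_nat one_pos n

lemma rpow_factor_mul_le {y δ : ℝ} (hy : 0 < y) (hδ : 0 < δ) :
    h y ^ δ * F (y + 1) ≤ F (y + 1 + δ) := by
  have hF₁ := hF.pos (y + 1) (by linarith)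
  have hslope := hF.convexOn_log.slope_mono_adjacent (x := y) (y := y + 1) (z := y + 1 + δ)
    hy (show 0 < y + 1 + δ by linarith) (by linarith) (by linarith)
  simp only [add_sub_cancel_left, div_one, Function.comp_apply, ← hF.log_factor hy] at hslope
  rw [le_div_iff₀ hδ] at hslope
  rw [← Real.log_le_log_iff (mul_pos (Real.rpow_pos_of_pos (hF.factor_pos hy) δ) hF₁)
      (hF.pos _ (by linarith)),
    Real.log_mul (Real.rpow_pos_of_pos (hF.factor_pos hy) δ).ne' hF₁.ne',
    Real.log_rpow (hF.factor_pos hy)]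
  linarith

lemma le_rpow_factor_mul {y δ : ℝ} (hy : 0 < y) (hδ : 0 < δ) :
    F (y + δ) ≤ h (y + δ) ^ δ * F y := by
  have hyδ : 0 < y + δ := by linarith
  have hslope := hF.convexOn_log.slope_mono_adjacent (x := y) (y := y + δ) (z := y + δ + 1)
    hy (show 0 < y + δ + 1 by linarith) (by linarith) (by linarith)
  simp only [add_sub_cancel_left, div_one, Function.comp_apply, ← hF.log_factor hyδ] at hslope
  rw [div_le_iff₀ hδ] at hslope
  rw [← Real.log_le_log_iff (hF.pos _ hyδ)
      (mul_pos (Real.rpow_pos_of_pos (hF.factor_pos hyδ) δ) (hF.pos y hy)),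
    Real.log_mul (Real.rpow_pos_of_pos (hF.factor_pos hyδ) δ).ne' (hF.pos y hy).ne',
    Real.log_rpow (hF.factor_pos hyδ)]
  linarith

lemma prod_factor_pos {x : ℝ} (hx : 0 < x) (n : ℕ) : 0 < ∏ k ∈ Finset.range n, h (x + k) :=
  Finset.prod_pos fun _ _ => hF.factor_pos (by positivity)

lemma eulerSeq_le {x : ℝ} (hx : 0 < x) {n : ℕ} (hn : 0 < n) : eulerSeq h x n n ≤ F x := by
  have hle := hF.rpow_factor_mul_le (Nat.cast_pos.2 hn) hx
  rw [hF.nat_add_one, add_comm _ x, ← Nat.cast_add_one, hF.add_nat hx] at hle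
  rwa [eulerSeq, div_le_iff₀' (hF.prod_factor_pos hx _)]

lemma le_eulerSeq {x : ℝ} (hx : 0 < x) (n : ℕ) : F x ≤ eulerSeq h x (x + (n + 1)) n := by
  have hle := hF.le_rpow_factor_mul (y := n + 1) (by positivity) hx
  rw [hF.nat_add_one, add_comm _ x, ← Nat.cast_add_one, hF.add_nat hx] at hle
  rw [eulerSeq, le_div_iff₀' (hF.prod_factor_pos hx _)]
  exact_mod_cast hle

end IsGammaFor

lemma tendsto_eulerSeq {ι : Type*} {l : Filter ι} {h : ι → ℝ → ℝ}
    (hh : ∀ y, 0 < y → Tendsto (h · y) l (𝓝 y)) {x c : ℝ} (hx : 0 < x) (hc : 0 < c) (n : ℕ) :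
    Tendsto (fun i => eulerSeq (h i) x c n) l (𝓝 (eulerSeq id x c n)) := by
  refine (((hh c hc).rpow_const (.inl hc.ne')).mul ?_).div ?_ ?_
  · exact tendsto_finsetProd _ fun k _ => hh _ (by positivity)
  · exact tendsto_finsetProd _ fun k _ => hh _ (by positivity)
  · exact Finset.prod_ne_zero_iff.2 fun k _ => ne_of_gt (show (0 : ℝ) < x + k by positivity)

lemma tendsto_eulerSeq_id (x : ℝ) :
    Tendsto (fun n : ℕ => eulerSeq id x n n) atTop (𝓝 (Real.Gamma x)) := by
  simp only [eulerSeq_id]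
  exact Real.GammaSeq_tendsto_Gamma x

lemma tendsto_eulerSeq_id_add {x : ℝ} (hx : 0 < x) :
    Tendsto (fun n : ℕ => eulerSeq id x (x + (n + 1)) n) atTop (𝓝 (Real.Gamma x)) := by
  have hbase : Tendsto (fun n : ℕ => 1 + (x + 1) / n) atTop (𝓝 1) := by
    simpa using (tendsto_const_div_atTop_nhds_zero_nat (x + 1)).const_add 1
  have hpow : Tendsto (fun n : ℕ => (1 + (x + 1) / n) ^ x) atTop (𝓝 1) := by
    simpa using hbase.rpow_const (p := x) (.inl one_ne_zero)
  have hlim := hpow.mul (tendsto_eulerSeq_id x)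
  rw [one_mul] at hlim
  refine hlim.congr' ?_
  filter_upwards [eventually_gt_atTop 0] with n hn
  have hn' : (0 : ℝ) < n := Nat.cast_pos.2 hn
  have hsplit : x + (n + 1) = (1 + (x + 1) / n) * n := by field_simp; ring
  rw [eulerSeq_id, eulerSeq_id, hsplit, Real.mul_rpow (by positivity) hn'.le]
  ring

theorem tendsto_Gamma_of_isGammaFor {ι : Type*} {l : Filter ι} {h F : ι → ℝ → ℝ}
    (hF : ∀ᶠ i in l, IsGammaFor (h i) (F i)) (hh : ∀ y, 0 < y → Tendsto (h · y) l (𝓝 y))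
    {x : ℝ} (hx : 0 < x) : Tendsto (F · x) l (𝓝 (Real.Gamma x)) := by
  refine tendsto_order.2 ⟨fun a ha => ?_, fun a ha => ?_⟩
  · obtain ⟨n, hna, hn⟩ := (((tendsto_eulerSeq_id x).eventually_const_lt ha).and
      (eventually_gt_atTop 0)).exists
    filter_upwards [hF, (tendsto_eulerSeq hh hx (Nat.cast_pos.2 hn) n).eventually_const_lt hna]
      with i hFi hi
    exact hi.trans_le (hFi.eulerSeq_le hx hn)
  · obtain ⟨n, hna⟩ := ((tendsto_eulerSeq_id_add hx).eventually_lt_const ha).exists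
    filter_upwards [hF, (tendsto_eulerSeq hh hx (by positivity) n).eventually_lt_const hna]
      with i hFi hi
    exact (hFi.le_eulerSeq hx n).trans_lt hi

/-- The infinite q-Pochhammer symbol `(a;q)_∞` of real arguments. -/
noncomputable def qPochReal (a q : ℝ) : ℝ := ∏' k : ℕ, (1 - a * q ^ k)

lemma qPochInf_ofReal (a q : ℝ) : qPochInf a q = qPochReal a q := by
  have hcast := Topology.IsClosedEmbedding.map_tprod (fun k : ℕ => 1 - a * q ^ k)
    (L := SummationFilter.unconditional ℕ) (g := Complex.ofRealHom)
    Complex.isometry_ofReal.isClosedEmbedding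
  simpa only [qPochInf, qPochReal, Complex.ofRealHom_eq_coe, Complex.ofReal_sub, Complex.ofReal_one,
    Complex.ofReal_mul, Complex.ofReal_pow] using hcast.symm

lemma summable_neg_mul_pow {q : ℝ} (hq : |q| < 1) (a : ℝ) : Summable fun k : ℕ => -(a * q ^ k) :=
  ((summable_geometric_of_abs_lt_one hq).mul_left a).neg

lemma multipliable_one_sub_mul_pow {q : ℝ} (hq : |q| < 1) (a : ℝ) :
    Multipliable fun k : ℕ => 1 - a * q ^ k := by
  simpa only [sub_eq_add_neg] using
    Real.multipliable_one_add_of_summable (summable_neg_mul_pow hq a)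

lemma qPochReal_eq_one_sub_mul {q : ℝ} (hq : |q| < 1) (a : ℝ) :
    qPochReal a q = (1 - a) * qPochReal (a * q) q := by
  have hshift (k : ℕ) : a * q ^ (k + 1) = a * q * q ^ k := by ring
  rw [qPochReal, qPochReal, tprod_eq_zero_mul']
  · simp only [pow_zero, mul_one, hshift]
  · simpa only [hshift] using multipliable_one_sub_mul_pow hq (a * q)

lemma qPochReal_mul_qPochReal_neg {q : ℝ} (hq : |q| < 1) (a : ℝ) :
    qPochReal a q * qPochReal (-a) q = qPochReal (a ^ 2) (q ^ 2) := by
  rw [qPochReal, qPochReal, qPochReal, ← (multipliable_one_sub_mul_pow hq a).tprod_mul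
    (multipliable_one_sub_mul_pow hq (-a))]
  exact tprod_congr fun k => by ring

lemma summable_log_one_sub_mul_pow {q : ℝ} (hq : |q| < 1) (a : ℝ) :
    Summable fun k : ℕ => Real.log (1 - a * q ^ k) := by
  simpa only [sub_eq_add_neg] using
    Real.summable_log_one_add_of_summable (summable_neg_mul_pow hq a)

section UnitInterval

variable {q : ℝ} (hq : q ∈ Ioo (0 : ℝ) 1)

include hq

lemma abs_lt_one_of_mem_Ioo : |q| < 1 := abs_lt.2 ⟨by linarith [hq.1], hq.2⟩

lemma one_sub_mul_pow_pos {a : ℝ} (ha : a < 1) (k : ℕ) : 0 < 1 - a * q ^ k := by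
  have hpow : q ^ k ≤ 1 := pow_le_one₀ hq.1.le hq.2.le
  have hpow' : 0 < q ^ k := pow_pos hq.1 k
  nlinarith

lemma exp_tsum_log_eq_qPochReal {a : ℝ} (ha : a < 1) :
    Real.exp (∑' k : ℕ, Real.log (1 - a * q ^ k)) = qPochReal a q :=
  Real.rexp_tsum_eq_tprod (one_sub_mul_pow_pos hq ha)
    (summable_log_one_sub_mul_pow (abs_lt_one_of_mem_Ioo hq) a)

lemma qPochReal_pos {a : ℝ} (ha : a < 1) : 0 < qPochReal a q :=
  exp_tsum_log_eq_qPochReal hq ha ▸ Real.exp_pos _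

lemma concaveOn_log_qPochReal_rpow :
    ConcaveOn ℝ (Ioi 0) fun x : ℝ => Real.log (qPochReal (q ^ x) q) := by
  have hlt {x : ℝ} (hx : x ∈ Ioi 0) : q ^ x < 1 := Real.rpow_lt_one hq.1.le hq.2 hx
  have hterm (k : ℕ) : ConcaveOn ℝ (Ioi 0) fun x : ℝ => Real.log (1 - q ^ x * q ^ k) := by
    refine concaveOn_log_of_pos ?_ fun x hx => one_sub_mul_pow_pos hq (hlt hx) k
    have hconv : ConvexOn ℝ (Ioi 0) fun x : ℝ => q ^ k * q ^ x :=
      ((convexOn_rpow_left hq.1).subset (subset_univ _) (convex_Ioi 0)).smul (pow_pos hq.1 k).le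
    refine ((concaveOn_const 1 (convex_Ioi 0)).sub hconv).congr fun x _ => ?_
    simp only [Pi.sub_apply, mul_comm]
  refine (concaveOn_tsum (convex_Ioi 0) hterm fun x _ =>
    summable_log_one_sub_mul_pow (abs_lt_one_of_mem_Ioo hq) _).congr fun x hx => ?_
  rw [← exp_tsum_log_eq_qPochReal hq (hlt hx), Real.log_exp]

end UnitInterval

/-- The q-number `[x]_q = (1 - q^x) / (1 - q)`. -/
noncomputable def qNumber (q x : ℝ) : ℝ := (1 - q ^ x) / (1 - q)

lemma tendsto_qNumber (x : ℝ) : Tendsto (qNumber · x) (𝓝[<] 1) (𝓝 x) := by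
  have hderiv : HasDerivAt (fun q : ℝ => q ^ x) x 1 := by
    simpa using Real.hasDerivAt_rpow_const (p := x) (.inl one_ne_zero)
  refine (hderiv.tendsto_slope.mono_left (nhdsLT_le_nhdsNE 1)).congr fun q => ?_
  rw [slope_def_field, Real.one_rpow, qNumber, ← neg_sub, ← neg_sub 1 q, neg_div_neg_eq]

/-- Jackson's q-Gamma function `Γ_q(x) = (q;q)_∞ / (q^x;q)_∞ * (1 - q)^(1 - x)`. -/
noncomputable def qGamma (q x : ℝ) : ℝ :=
  qPochReal q q / qPochReal (q ^ x) q * (1 - q) ^ (1 - x)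

section QGamma

variable {q : ℝ} (hq : q ∈ Ioo (0 : ℝ) 1)

include hq

lemma qGamma_pos {x : ℝ} (hx : 0 < x) : 0 < qGamma q x :=
  mul_pos (div_pos (qPochReal_pos hq hq.2) (qPochReal_pos hq (Real.rpow_lt_one hq.1.le hq.2 hx)))
    (Real.rpow_pos_of_pos (sub_pos.2 hq.2) _)

lemma qGamma_one : qGamma q 1 = 1 := by
  simp [qGamma, (qPochReal_pos hq hq.2).ne']

lemma one_sub_rpow_ne_zero {x : ℝ} (hx : x ≠ 0) : 1 - q ^ x ≠ 0 := by
  have hne : q ^ x ≠ q ^ (0 : ℝ) := (Real.rpow_right_inj hq.1 hq.2.ne).not.2 hx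
  rwa [Real.rpow_zero, ne_comm, ← sub_ne_zero] at hne

lemma qPochReal_rpow (x : ℝ) :
    qPochReal (q ^ x) q = (1 - q ^ x) * qPochReal (q ^ (x + 1)) q := by
  rw [Real.rpow_add_one hq.1.ne', ← qPochReal_eq_one_sub_mul (abs_lt_one_of_mem_Ioo hq)]

lemma qGamma_add_one {x : ℝ} (hx : x ≠ 0) : qGamma q (x + 1) = qNumber q x * qGamma q x := by
  have hpow : (1 - q) ^ (1 - x) = (1 - q) ^ (1 - (x + 1)) * (1 - q) := by
    rw [← Real.rpow_add_one (sub_pos.2 hq.2).ne']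
    ring_nf
  have := one_sub_rpow_ne_zero hq hx
  have := (sub_pos.2 hq.2).ne'
  rw [qGamma, qGamma, qNumber, qPochReal_rpow hq x, hpow]
  field_simp

lemma convexOn_log_qGamma : ConvexOn ℝ (Ioi 0) (Real.log ∘ qGamma q) := by
  have hpos {x : ℝ} (hx : x ∈ Ioi 0) : 0 < qPochReal (q ^ x) q :=
    qPochReal_pos hq (Real.rpow_lt_one hq.1.le hq.2 hx)
  have hlin : ConvexOn ℝ (Ioi 0) fun x : ℝ =>
      Real.log (qPochReal q q) + (1 - x) * Real.log (1 - q) :=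
    ⟨convex_Ioi 0, fun x _ y _ a b _ _ hab => le_of_eq <| by
      simp only [smul_eq_mul]
      linear_combination (Real.log (qPochReal q q) + Real.log (1 - q)) * (-hab)⟩
  refine (hlin.sub (concaveOn_log_qPochReal_rpow hq)).congr fun x hx => ?_
  have hs : 0 < 1 - q := sub_pos.2 hq.2
  simp only [Pi.sub_apply, Function.comp_apply, qGamma]
  rw [Real.log_mul (div_pos (qPochReal_pos hq hq.2) (hpos hx)).ne' (Real.rpow_pos_of_pos hs _).ne',
    Real.log_div (qPochReal_pos hq hq.2).ne' (hpos hx).ne', Real.log_rpow hs]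
  ring

lemma isGammaFor_qGamma : IsGammaFor (qNumber q) (qGamma q) where
  convexOn_log := convexOn_log_qGamma hq
  add_one _ hy := qGamma_add_one hq hy.ne'
  pos _ hy := qGamma_pos hq hy
  one := qGamma_one hq

lemma qGamma_div_qGamma (x y : ℝ) :
    qGamma q y / qGamma q x =
      qPochReal (q ^ x) q / qPochReal (q ^ y) q * (1 - q) ^ (x - y) := by
  have hs : 0 < 1 - q := sub_pos.2 hq.2
  have hpow : (1 - q) ^ (x - y) = (1 - q) ^ (1 - y) / (1 - q) ^ (1 - x) := by
    rw [← Real.rpow_sub hs]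
    ring_nf
  have := (qPochReal_pos hq hq.2).ne'
  rw [qGamma, qGamma, hpow, mul_div_mul_comm, div_div_div_cancel_left' _ _ this]

lemma qPochReal_neg_rpow (x : ℝ) :
    qPochReal (-q ^ x) q = (1 + q ^ x) * qPochReal (-q ^ (x + 1)) q := by
  rw [qPochReal_eq_one_sub_mul (abs_lt_one_of_mem_Ioo hq), sub_neg_eq_add, neg_mul,
    ← Real.rpow_add_one hq.1.ne']

lemma qPochReal_neg_rpow_ne_zero (x : ℝ) : qPochReal (-q ^ x) q ≠ 0 :=
  (qPochReal_pos hq (by linarith [Real.rpow_pos_of_pos hq.1 x])).ne'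

lemma qGamma_div_qGamma_sq {x : ℝ} (hx : 0 < x) :
    qGamma q x / qGamma (q ^ 2) x =
      qPochReal (-q ^ x) q / qPochReal (-q) q * (1 + q) ^ (x - 1) := by
  have habs := abs_lt_one_of_mem_Ioo hq
  have hs : 0 < 1 - q := sub_pos.2 hq.2
  have hs' : 0 < 1 + q := by linarith [hq.1]
  have hne := (qPochReal_pos hq hq.2).ne'
  have hne' := (qPochReal_pos hq (Real.rpow_lt_one hq.1.le hq.2 hx)).ne'
  have hneg : qPochReal (-q) q ≠ 0 := by simpa using qPochReal_neg_rpow_ne_zero hq 1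
  have hneg' := qPochReal_neg_rpow_ne_zero hq x
  have hsq : (q ^ 2) ^ x = (q ^ x) ^ 2 := (Real.rpow_pow_comm hq.1.le x 2).symm
  have hbase : (1 - q ^ 2) ^ (1 - x) = (1 - q) ^ (1 - x) * (1 + q) ^ (1 - x) := by
    rw [← Real.mul_rpow hs.le hs'.le]
    ring_nf
  rw [qGamma, qGamma, hsq, ← qPochReal_mul_qPochReal_neg habs, ← qPochReal_mul_qPochReal_neg habs,
    hbase, ← neg_sub 1 x, Real.rpow_neg hs'.le]
  field_simp

end QGamma

lemma eventually_mem_Ioo_nhdsLT_one : ∀ᶠ q : ℝ in 𝓝[<] 1, q ∈ Ioo (0 : ℝ) 1 :=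
  Ioo_mem_nhdsLT one_pos

lemma ne_neg_natCast_of_pos {x : ℝ} (hx : 0 < x) (m : ℕ) : x ≠ -m :=
  ((neg_nonpos.2 m.cast_nonneg).trans_lt hx).ne'

lemma induction_of_pos_of_add_one {P : ℝ → Prop} (hpos : ∀ x, 0 < x → P x)
    (hstep : ∀ x, P (x + 1) → P x) (x : ℝ) : P x := by
  obtain ⟨n, hn⟩ := exists_nat_gt (-x)
  induction n generalizing x with
  | zero => exact hpos x (by simpa using hn)
  | succ n ih => exact hstep x (ih (x + 1) (by push_cast at hn; linarith))

lemma tendsto_qGamma {x : ℝ} (hx : ∀ m : ℕ, x ≠ -m) :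
    Tendsto (qGamma · x) (𝓝[<] 1) (𝓝 (Real.Gamma x)) := by
  induction x using induction_of_pos_of_add_one with
  | hpos x hpos =>
    exact tendsto_Gamma_of_isGammaFor
      (eventually_mem_Ioo_nhdsLT_one.mono fun _ => isGammaFor_qGamma)
      (fun y _ => tendsto_qNumber y) hpos
  | hstep x ih =>
    have hx₀ : x ≠ 0 := by simpa using hx 0
    have hx₁ (m : ℕ) : x + 1 ≠ -m := fun h => hx (m + 1) (by push_cast; linarith)
    have hlim := (ih hx₁).div (tendsto_qNumber x) hx₀
    rw [Real.Gamma_add_one hx₀, mul_div_cancel_left₀ _ hx₀] at hlim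
    refine hlim.congr' ?_
    filter_upwards [eventually_mem_Ioo_nhdsLT_one] with q hq
    have hqx : qNumber q x ≠ 0 :=
      div_ne_zero (one_sub_rpow_ne_zero hq hx₀) (sub_pos.2 hq.2).ne'
    rw [Pi.div_apply, qGamma_add_one hq hx₀, mul_div_cancel_left₀ _ hqx]

lemma tendsto_qPochReal_div_qPochReal {x y : ℝ} (hx : ∀ m : ℕ, x ≠ -m) (hy : ∀ m : ℕ, y ≠ -m) :
    Tendsto (fun q => qPochReal (q ^ x) q / qPochReal (q ^ y) q * (1 - q) ^ (x - y)) (𝓝[<] 1)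
      (𝓝 (Real.Gamma y / Real.Gamma x)) := by
  refine ((tendsto_qGamma hy).div (tendsto_qGamma hx) (Real.Gamma_ne_zero hx)).congr' ?_
  filter_upwards [eventually_mem_Ioo_nhdsLT_one] with q hq
  exact qGamma_div_qGamma hq x y

lemma tendsto_sq_nhdsLT_one : Tendsto (fun q : ℝ => q ^ 2) (𝓝[<] 1) (𝓝[<] 1) := by
  refine tendsto_nhdsWithin_iff.2 ⟨?_, ?_⟩
  · simpa using ((continuous_pow 2).tendsto (1 : ℝ)).mono_left nhdsWithin_le_nhds
  · filter_upwards [eventually_mem_Ioo_nhdsLT_one] with q hq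
    exact pow_lt_one₀ hq.1.le hq.2 two_ne_zero

lemma tendsto_one_add_rpow (x : ℝ) : Tendsto (fun q : ℝ => 1 + q ^ x) (𝓝[<] 1) (𝓝 2) := by
  have hlim : Tendsto (fun q : ℝ => 1 + q ^ x) (𝓝 1) (𝓝 (1 + 1 ^ x)) :=
    (Real.continuousAt_rpow_const 1 x (.inl one_ne_zero)).tendsto.const_add 1
  rw [Real.one_rpow, one_add_one_eq_two] at hlim
  exact hlim.mono_left nhdsWithin_le_nhds

lemma tendsto_qPochReal_neg_div (x : ℝ) :
    Tendsto (fun q => qPochReal (-q ^ x) q / qPochReal (-q) q) (𝓝[<] 1) (𝓝 (2 ^ (1 - x))) := by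
  induction x using induction_of_pos_of_add_one with
  | hpos x hx =>
    have hΓ := ne_neg_natCast_of_pos hx
    have hlim := ((tendsto_qGamma hΓ).div ((tendsto_qGamma hΓ).comp tendsto_sq_nhdsLT_one)
      (Real.Gamma_ne_zero hΓ)).mul ((tendsto_one_add_rpow 1).rpow_const (p := 1 - x)
      (.inl two_ne_zero))
    rw [div_self (Real.Gamma_ne_zero hΓ), one_mul] at hlim
    refine hlim.congr' ?_
    filter_upwards [eventually_mem_Ioo_nhdsLT_one] with q hq
    have hs : 0 < 1 + q := by linarith [hq.1]
    rw [Pi.div_apply, Function.comp_apply, qGamma_div_qGamma_sq hq hx, Real.rpow_one, mul_assoc,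
      ← Real.rpow_add hs, sub_add_sub_cancel, sub_self, Real.rpow_zero, mul_one]
  | hstep x ih =>
    have hlim := (tendsto_one_add_rpow x).mul ih
    rw [mul_comm (2 : ℝ), ← Real.rpow_add_one two_ne_zero,
      show 1 - (x + 1) + 1 = 1 - x by ring] at hlim
    refine hlim.congr' ?_
    filter_upwards [eventually_mem_Ioo_nhdsLT_one] with q hq
    rw [qPochReal_neg_rpow hq x, mul_div_assoc]

lemma tendsto_qPochReal_neg_div_qPochReal_neg (x y : ℝ) :
    Tendsto (fun q => qPochReal (-q ^ x) q / qPochReal (-q ^ y) q) (𝓝[<] 1)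
      (𝓝 (2 ^ (y - x))) := by
  have hlim := (tendsto_qPochReal_neg_div x).div (tendsto_qPochReal_neg_div y) (by positivity)
  rw [← Real.rpow_sub two_pos, sub_sub_sub_cancel_left] at hlim
  refine hlim.congr' ?_
  filter_upwards [eventually_mem_Ioo_nhdsLT_one] with q hq
  exact div_div_div_cancel_right₀ (by simpa using qPochReal_neg_rpow_ne_zero hq 1) _ _

lemma tendsto_two_div_sqrt : Tendsto (fun N : ℕ => 2 / √(N : ℝ)) atTop (𝓝[>] 0) := by
  refine tendsto_nhdsWithin_iff.2 ⟨?_, ?_⟩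
  · exact (Real.tendsto_sqrt_atTop.comp tendsto_natCast_atTop_atTop).const_div_atTop 2
  · filter_upwards [eventually_gt_atTop 0] with N hN
    have : (0 : ℝ) < N := Nat.cast_pos.2 hN
    exact div_pos two_pos (Real.sqrt_pos.2 this)

lemma tendsto_qN : Tendsto qN atTop (𝓝[<] 1) := by
  have hexp : Tendsto (fun ε : ℝ => Real.exp (-ε)) (𝓝[>] 0) (𝓝[<] 1) := by
    refine tendsto_nhdsWithin_iff.2 ⟨?_, ?_⟩
    · have hcont : Continuous fun ε : ℝ => Real.exp (-ε) := by fun_prop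
      simpa using (hcont.tendsto 0).mono_left (nhdsWithin_le_nhds (s := Ioi 0))
    · filter_upwards [self_mem_nhdsWithin] with ε hε
      exact Real.exp_lt_one_iff.2 (neg_lt_zero.2 hε)
  refine (hexp.comp tendsto_two_div_sqrt).congr fun N => ?_
  rw [Function.comp_apply, qN, neg_div]

lemma tendsto_sqrt_mul_one_sub_qN :
    Tendsto (fun N : ℕ => √(N : ℝ) * (1 - qN N)) atTop (𝓝 2) := by
  have hderiv : HasDerivAt (fun ε : ℝ => -Real.exp (-ε)) 1 0 := by
    simpa [Pi.neg_def] using (hasDerivAt_neg (0 : ℝ)).exp.neg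
  have hlim := (hderiv.tendsto_slope_zero_right.comp tendsto_two_div_sqrt).const_mul 2
  rw [mul_one] at hlim
  refine hlim.congr fun N => ?_
  simp only [Function.comp_apply, zero_add, neg_zero, Real.exp_zero, smul_eq_mul, inv_div, qN,
    neg_div]
  ring

lemma tendsto_rpow_mul_one_sub_qN_rpow (d : ℝ) :
    Tendsto (fun N : ℕ => (N : ℝ) ^ d * ((1 - qN N) / 2) ^ (2 * d)) atTop (𝓝 1) := by
  have hone : Tendsto (fun N : ℕ => √(N : ℝ) * ((1 - qN N) / 2)) atTop (𝓝 1) := by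
    simpa only [mul_div_assoc, div_self (two_ne_zero' ℝ)] using
      tendsto_sqrt_mul_one_sub_qN.div_const 2
  have hlim := hone.rpow_const (p := 2 * d) (.inl one_ne_zero)
  rw [Real.one_rpow] at hlim
  refine hlim.congr' ?_
  filter_upwards [tendsto_qN.eventually eventually_mem_Ioo_nhdsLT_one] with N hq
  rw [Real.mul_rpow (Real.sqrt_nonneg _) (half_pos (sub_pos.2 hq.2)).le,
    Real.rpow_mul (Real.sqrt_nonneg _), Real.rpow_two, Real.sq_sqrt N.cast_nonneg]

lemma tendsto_rpow_mul_comp_qN {f : ℝ → ℝ} {d L : ℝ}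
    (hf : Tendsto (fun q => f q * (2 / (1 - q)) ^ (2 * d)) (𝓝[<] 1) (𝓝 L)) :
    Tendsto (fun N : ℕ => (N : ℝ) ^ d * f (qN N)) atTop (𝓝 L) := by
  have hlim := (tendsto_rpow_mul_one_sub_qN_rpow d).mul (hf.comp tendsto_qN)
  rw [one_mul] at hlim
  refine hlim.congr' ?_
  filter_upwards [tendsto_qN.eventually eventually_mem_Ioo_nhdsLT_one] with N hq
  have hbase : 0 < (1 - qN N) / 2 := half_pos (sub_pos.2 hq.2)
  have hcancel : ((1 - qN N) / 2) ^ (2 * d) * (2 / (1 - qN N)) ^ (2 * d) = 1 := by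
    rw [← inv_div (1 - qN N) 2, ← Real.mul_rpow hbase.le (inv_pos.2 hbase).le,
      mul_inv_cancel₀ hbase.ne', Real.one_rpow]
  rw [Function.comp_apply, mul_mul_mul_comm, hcancel, mul_one]

lemma qpow_eq (N : ℕ) (x : ℝ) : qpow N x = ((qN N ^ x : ℝ) : ℂ) := by
  rw [qpow, qN, ← Real.exp_mul, mul_div_right_comm]

lemma tendsto_qPochReal_quotient {x y d : ℝ} (a b : ℝ) (hx : ∀ m : ℕ, x ≠ -m)
    (hy : ∀ m : ℕ, y ≠ -m) (hxd : ∀ m : ℕ, x + d ≠ -m) (hyd : ∀ m : ℕ, y + d ≠ -m) :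
    Tendsto (fun q =>
      qPochReal (q ^ x) q * qPochReal (-q ^ (a + d)) q *
        qPochReal (-q ^ (b + d)) q * qPochReal (q ^ y) q /
      (qPochReal (q ^ (x + d)) q * qPochReal (-q ^ a) q *
        qPochReal (-q ^ b) q * qPochReal (q ^ (y + d)) q) * (2 / (1 - q)) ^ (2 * d))
      (𝓝[<] 1)
      (𝓝 (Real.Gamma (y + d) * Real.Gamma (x + d) / (Real.Gamma x * Real.Gamma y))) := by
  have hpos := (tendsto_qPochReal_div_qPochReal hx hxd).mul (tendsto_qPochReal_div_qPochReal hy hyd)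
  have hneg := (tendsto_qPochReal_neg_div_qPochReal_neg (a + d) a).mul
    (tendsto_qPochReal_neg_div_qPochReal_neg (b + d) b)
  have hlim := (hpos.mul hneg).mul_const (2 ^ d * 2 ^ d)
  simp only [sub_add_cancel_left] at hlim
  have hvalue : Real.Gamma (x + d) / Real.Gamma x * (Real.Gamma (y + d) / Real.Gamma y) *
      (2 ^ (-d) * 2 ^ (-d)) * (2 ^ d * 2 ^ d) =
      Real.Gamma (y + d) * Real.Gamma (x + d) / (Real.Gamma x * Real.Gamma y) := by
    rw [Real.rpow_neg two_pos.le]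
    field_simp
  rw [hvalue] at hlim
  refine hlim.congr' ?_
  filter_upwards [eventually_mem_Ioo_nhdsLT_one] with q hq
  have hs : 0 < 1 - q := sub_pos.2 hq.2
  have hscale : (2 / (1 - q)) ^ (2 * d) =
      (1 - q) ^ (-d) * (1 - q) ^ (-d) * (2 ^ d * 2 ^ d) := by
    rw [two_mul, Real.rpow_add (div_pos two_pos hs), Real.div_rpow two_pos.le hs.le,
      Real.rpow_neg hs.le]
    ring
  rw [hscale]
  ring

theorem statement10_general (u v w r t : ℝ) (hut : ∀ m : ℕ, -2 * u + t ≠ -m)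
    (hwr : ∀ m : ℕ, w + r ≠ -m) (hvut : ∀ m : ℕ, v - u + t ≠ -m)
    (huvwr : ∀ m : ℕ, u + v + w + r ≠ -m) :
    Tendsto (fun N : ℕ =>
      Complex.ofReal ((N : ℝ) ^ (u + v)) *
      (qPochInf (qpow N (-2 * u + t)) (qN N) * qPochInf (-(qpow N (v + w + t))) (qN N) *
       qPochInf (-(qpow N (v + r))) (qN N) * qPochInf (qpow N (w + r)) (qN N)) /
      (qPochInf (qpow N (v - u + t)) (qN N) * qPochInf (-(qpow N (w - u + t))) (qN N) *
       qPochInf (-(qpow N (r - u))) (qN N) * qPochInf (qpow N (u + v + w + r)) (qN N)))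
      atTop
      (𝓝 (Complex.Gamma ((u + v + w + r : ℝ) : ℂ) * Complex.Gamma ((v - u + t : ℝ) : ℂ) /
        (Complex.Gamma ((-2 * u + t : ℝ) : ℂ) * Complex.Gamma ((w + r : ℝ) : ℂ)))) := by
  have hx : v - u + t = -2 * u + t + (u + v) := by ring
  have hy : u + v + w + r = w + r + (u + v) := by ring
  have ha : v + w + t = w - u + t + (u + v) := by ring
  have hb : v + r = r - u + (u + v) := by ring
  rw [hx] at hvut
  rw [hy] at huvwr
  have hlim := tendsto_rpow_mul_comp_qN
    (tendsto_qPochReal_quotient (w - u + t) (r - u) hut hwr hvut huvwr)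
  simp only [hx, hy, ha, hb, qpow_eq, ← Complex.ofReal_neg, qPochInf_ofReal, Complex.Gamma_ofReal,
    ← Complex.ofReal_mul, ← Complex.ofReal_div]
  exact ((Complex.continuous_ofReal.tendsto _).comp hlim).congr fun N =>
    congrArg Complex.ofReal (mul_div_assoc ..).symm

theorem statement10 (u v w r t : ℝ) (huv : 0 < u + v) (hw : 0 < w) (hr : 0 < r)
    (ht1 : -(2 * w) < t) (ht2 : t < 2 * r) (hu : u - t / 2 < 0) :
    Tendsto (fun N : ℕ =>
      Complex.ofReal ((N : ℝ) ^ (u + v)) *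
      (qPochInf (qpow N (-2 * u + t)) (qN N) * qPochInf (-(qpow N (v + w + t))) (qN N) *
       qPochInf (-(qpow N (v + r))) (qN N) * qPochInf (qpow N (w + r)) (qN N)) /
      (qPochInf (qpow N (v - u + t)) (qN N) * qPochInf (-(qpow N (w - u + t))) (qN N) *
       qPochInf (-(qpow N (r - u))) (qN N) * qPochInf (qpow N (u + v + w + r)) (qN N)))
      atTop
      (nhds (Complex.Gamma ((u + v + w + r : ℝ) : ℂ) * Complex.Gamma ((v - u + t : ℝ) : ℂ) /
        (Complex.Gamma ((-2 * u + t : ℝ) : ℂ) * Complex.Gamma ((w + r : ℝ) : ℂ)))) :=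
  statement10_general u v w r t (ne_neg_natCast_of_pos (by linarith))
    (ne_neg_natCast_of_pos (by linarith)) (ne_neg_natCast_of_pos (by linarith))
    (ne_neg_natCast_of_pos (by linarith))
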